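/- Let α be a simple root with α ∈ ℤΓ, and assume: (i) at least two elements λ of F satisfy ⟨α^∨, λ⟩ ≠ 0; (ii) λ^#(α) ≤ 1 for every λ ∈ F; (iii) the set E(α) := {λ ∈ F : λ^#(α) = 1} has at most two elements; (iv) if E(α) has exactly two elements, then E(α) = {λ ∈ F : ⟨α^∨, λ⟩ ≠ 0}. Then the set a(α) has exactly two elements, and every δ ∈ a(α) satisfies δ(λ) ≥ 0 for all λ ∈ F. -/

import Mathlib

open scoped RealInnerProductSpace

/-- The Cartan pairing `⟨α^∨, x⟩ = 2(α,x)/(α,α)`. -/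
noncomputable def cpair {V : Type*} [NormedAddCommGroup V] [InnerProductSpace ℝ V]
    (α x : V) : ℝ :=
  2 * ⟪α, x⟫ / ⟪α, α⟫

/-- A finite reduced crystallographic root system `Φ` in `V`, together with a fixed base `S`
(the set of simple roots): every root is a nonnegative or nonpositive integer combination of
simple roots. -/
structure BasedRootSystem (V : Type*) [NormedAddCommGroup V] [InnerProductSpace ℝ V] where
  Φ : Set V
  S : Set V
  finite : Φ.Finite
  ne_zero : ∀ α ∈ Φ, α ≠ 0
  neg_mem : ∀ α ∈ Φ, -α ∈ Φ
  reflect_mem : ∀ α ∈ Φ, ∀ β ∈ Φ, β - cpair α β • α ∈ Φ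
  pairing_int : ∀ α ∈ Φ, ∀ β ∈ Φ, ∃ n : ℤ, cpair α β = n
  reduced : ∀ α ∈ Φ, ∀ t : ℝ, t • α ∈ Φ → t = 1 ∨ t = -1
  base_subset : S ⊆ Φ
  base_indep : LinearIndependent ℝ ((↑) : S → V)
  pos_or_neg : ∀ β ∈ Φ,
      (∃ (t : Finset V) (c : V → ℕ), ↑t ⊆ S ∧ β = ∑ s ∈ t, (c s : ℝ) • s) ∨
      (∃ (t : Finset V) (c : V → ℕ), ↑t ⊆ S ∧ -β = ∑ s ∈ t, (c s : ℝ) • s)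

/-- `β` is a positive root: a root which is a nonnegative integer combination of the
simple roots. -/
def BasedRootSystem.IsPositiveRoot {V : Type*} [NormedAddCommGroup V] [InnerProductSpace ℝ V]
    (R : BasedRootSystem V) (β : V) : Prop :=
  β ∈ R.Φ ∧ ∃ (t : Finset V) (c : V → ℕ), ↑t ⊆ R.S ∧ β = ∑ s ∈ t, (c s : ℝ) • s

/-- `lam` is a dominant weight: `⟨β^∨, lam⟩` is a nonnegative integer for every simple
root `β`. -/
def BasedRootSystem.IsDominant {V : Type*} [NormedAddCommGroup V] [InnerProductSpace ℝ V]
    (R : BasedRootSystem V) (lam : V) : Prop :=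
  ∀ β ∈ R.S, ∃ n : ℕ, cpair β lam = n

/-- The set `a(α) = {δ ∈ Hom(ℤΓ, ℤ) : δ(α) = 1 and (δ ∈ {λ^#} or α^∨|_{ℤΓ} - δ ∈ {λ^#})}`,
where `lsharp` is the dual basis of `F` and `acheck` is the restriction `α^∨|_{ℤΓ}` of the
coroot of `α` to `ℤΓ`. -/
def aSet {V : Type*} [NormedAddCommGroup V] [InnerProductSpace ℝ V] (F : Finset V)
    (lsharp : V → (Submodule.span ℤ (F : Set V) →ₗ[ℤ] ℤ))
    (acheck : Submodule.span ℤ (F : Set V) →ₗ[ℤ] ℤ)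
    (α : V) (hα : α ∈ Submodule.span ℤ (F : Set V)) :
    Set (Submodule.span ℤ (F : Set V) →ₗ[ℤ] ℤ) :=
  {δ | δ ⟨α, hα⟩ = 1 ∧
    ((∃ lam ∈ F, δ = lsharp lam) ∨ (∃ lam ∈ F, acheck - δ = lsharp lam))}

/-! Let `E` be the set of `λ ∈ F` with `λ^#(α) = 1`. Every `δ ∈ a(α)` is `λ^#` or `α^∨ - λ^#` for
some `λ ∈ E`. Since `2 = α^∨(α) = ∑ λ^#(α) ⟨α^∨, λ⟩` with `λ^#(α) ≤ 1` and `⟨α^∨, λ⟩ ≥ 0`, the sum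
of `⟨α^∨, λ⟩` over `E` is at least `2`; in particular `E` is nonempty. If `E = {λ}`, then
`a(α) = {λ^#, α^∨ - λ^#}` and `⟨α^∨, λ⟩ ≥ 2`. If `E = {λ, μ}`, then `α^∨` is supported on `E`, so
`⟨α^∨, λ⟩ + ⟨α^∨, μ⟩ = 2` forces `α^∨ = λ^# + μ^#`, and again `a(α) = {λ^#, α^∨ - λ^#}`. The two
elements differ because `α^∨ = 2 λ^#` would be supported at a single element of `F`. -/

open Module

section CoordinateForms

variable {ι R M : Type*} [CommSemiring R] [AddCommMonoid M] [Module R M]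

/-- The set of indices at which `x` has coordinate `1` in the basis `b`. For `x = α` and the basis
`F` of `ℤΓ` it is the set `E(α)`. -/
def unitSupport (b : Basis ι R M) (x : M) : Set ι :=
  {i | b.coord i x = 1}

variable {b : Basis ι R M} {c : Dual R M} {x : M}

lemma finite_unitSupport [Nontrivial R] : (unitSupport b x).Finite :=
  (b.repr x).hasFiniteSupport.subset fun i (hi : b.coord i x = 1) =>
    show b.coord i x ≠ 0 from hi ▸ one_ne_zero

lemma eq_sum_smul_coord_of_support_subset {s : Finset ι}
    (hs : (Function.support fun i => c (b i)) ⊆ s) :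
    c = ∑ i ∈ s, c (b i) • b.coord i := by
  classical
  refine b.ext fun j => ?_
  have hj : j ∉ s → c (b j) = 0 := fun h => Function.notMem_support.mp fun h' => h (hs h')
  simpa [LinearMap.sum_apply, Finsupp.single_apply] using hj

end CoordinateForms

section PairedForms

variable {ι R M : Type*} [CommRing R] [AddCommGroup M] [Module R M]

/-- The set `a(x)` of linear forms with value `1` at `x` that are a coordinate form of `b`, or
whose difference from `c` is one. It is `aSet` for an arbitrary based module, with `c` in the
role of the coroot. -/
def pairedForms (b : Basis ι R M) (c : Dual R M) (x : M) : Set (Dual R M) :=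
  {δ | δ x = 1 ∧ (δ ∈ Set.range b.coord ∨ c - δ ∈ Set.range b.coord)}

variable {b : Basis ι R M} {c : Dual R M} {x : M}

lemma mem_pairedForms_iff (hcx : c x = 2) {δ : Dual R M} :
    δ ∈ pairedForms b c x ↔ ∃ i ∈ unitSupport b x, δ = b.coord i ∨ δ = c - b.coord i := by
  constructor
  · rintro ⟨hδ, ⟨i, rfl⟩ | ⟨i, hi⟩⟩
    · exact ⟨i, hδ, .inl rfl⟩
    · have hix : b.coord i x = 1 := by
        rw [hi, LinearMap.sub_apply, hcx, hδ]
        norm_num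
      exact ⟨i, hix, .inr (by rw [hi, sub_sub_cancel])⟩
  · rintro ⟨i, hi, rfl | rfl⟩
    · exact ⟨hi, .inl ⟨i, rfl⟩⟩
    · have hδ : (c - b.coord i) x = 1 := by
        rw [LinearMap.sub_apply, hcx, show b.coord i x = 1 from hi]
        norm_num
      exact ⟨hδ, .inr ⟨i, (sub_sub_cancel _ _).symm⟩⟩

lemma pairedForms_of_unitSupport_eq_singleton {i : ι} (hcx : c x = 2)
    (hE : unitSupport b x = {i}) :
    pairedForms b c x = {b.coord i, c - b.coord i} := by
  ext δ
  simp only [mem_pairedForms_iff hcx, hE, Set.mem_singleton_iff, exists_eq_left,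
    Set.mem_insert_iff]

lemma pairedForms_of_unitSupport_eq_pair {i j : ι} (hE : unitSupport b x = {i, j})
    (hc : c = b.coord i + b.coord j) :
    pairedForms b c x = {b.coord i, c - b.coord i} := by
  have hix : b.coord i x = 1 := hE.superset (Set.mem_insert i {j})
  have hjx : b.coord j x = 1 := hE.superset (Set.mem_insert_of_mem i rfl)
  have hcx : c x = 2 := by rw [hc, LinearMap.add_apply, hix, hjx, one_add_one_eq_two]
  have hi : c - b.coord i = b.coord j := by rw [hc, add_sub_cancel_left]
  have hj : c - b.coord j = b.coord i := by rw [hc, add_sub_cancel_right]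
  ext δ
  simp only [mem_pairedForms_iff hcx, hE, Set.mem_insert_iff, Set.mem_singleton_iff,
    exists_eq_or_imp, exists_eq_left, hi, hj]
  tauto

lemma coord_ne_sub_coord (hc : (Function.support fun i => c (b i)).Nontrivial) (i : ι) :
    b.coord i ≠ c - b.coord i := by
  intro h
  obtain ⟨j, hj, hji⟩ := hc.exists_ne i
  have hj0 : b.coord i (b j) = 0 := by simp [hji]
  have hcj := LinearMap.congr_fun h (b j)
  rw [LinearMap.sub_apply, hj0, sub_zero] at hcj
  exact hj hcj.symm

end PairedForms

section Positivity

variable {ι R M : Type*} [CommSemiring R] [PartialOrder R] [IsOrderedRing R]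
  [AddCommMonoid M] [Module R M] {b : Basis ι R M} {c : Dual R M} {x : M}

lemma coord_basis_nonneg (b : Basis ι R M) (i j : ι) : 0 ≤ b.coord i (b j) := by
  classical
  rw [b.coord_apply, b.repr_self_apply]
  split_ifs <;> simp

lemma apply_le_sum_of_coord_le (hc : ∀ i, 0 ≤ c (b i)) {s : Finset ι}
    (hs : ∀ i ∈ s, b.coord i x ≤ 1) (hs' : ∀ i ∉ s, b.coord i x ≤ 0) :
    c x ≤ ∑ i ∈ s, c (b i) := by
  classical
  calc c x = ∑ i ∈ s ∪ (b.repr x).support, b.coord i x * c (b i) := by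
        have hsupp : b.repr x ∈ Finsupp.supported R R (s ∪ (b.repr x).support : Finset ι) :=
          (Finsupp.mem_supported R _).mpr (Finset.coe_subset.mpr Finset.subset_union_right)
        have hx := congrArg c (Finsupp.linearCombination_apply_of_mem_supported R (v := b) hsupp)
        simpa only [b.linearCombination_repr, map_sum, map_smul, smul_eq_mul,
          b.coord_apply] using hx
    _ ≤ ∑ i ∈ s ∪ (b.repr x).support, if i ∈ s then c (b i) else 0 := by
        refine Finset.sum_le_sum fun i _ => ?_
        split_ifs with hi
        · exact mul_le_of_le_one_left (hc i) (hs i hi)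
        · exact mul_nonpos_of_nonpos_of_nonneg (hs' i hi) (hc i)
    _ = ∑ i ∈ s, c (b i) := by
        rw [Finset.sum_ite_mem, Finset.union_inter_cancel_left]

end Positivity

lemma sub_coord_basis_nonneg {ι R M : Type*} [CommRing R] [PartialOrder R] [IsOrderedRing R]
    [AddCommGroup M] [Module R M] {b : Basis ι R M} {c : Dual R M} (hc : ∀ j, 0 ≤ c (b j))
    {i : ι} (hi : 1 ≤ c (b i)) (j : ι) : 0 ≤ (c - b.coord i) (b j) := by
  classical
  rw [LinearMap.sub_apply, b.coord_apply, b.repr_self_apply, sub_nonneg]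
  split_ifs with h
  · exact h ▸ hi
  · exact hc j

section IntegralForms

variable {ι M : Type*} [AddCommGroup M] {b : Basis ι ℤ M} {c : Dual ℤ M} {x : M}

lemma apply_le_sum_of_unitSupport_subset (hc : ∀ i, 0 ≤ c (b i)) (hle : ∀ i, b.coord i x ≤ 1)
    {s : Finset ι} (hE : unitSupport b x ⊆ s) : c x ≤ ∑ i ∈ s, c (b i) := by
  refine apply_le_sum_of_coord_le hc (fun i _ => hle i) fun i hi => ?_
  have hne : b.coord i x ≠ 1 := fun h => hi (hE h)
  have := hle i
  omega

lemma eq_coord_add_coord {i j : ι} (hij : i ≠ j) (hcx : c x = 2) (hc : ∀ k, 0 ≤ c (b k))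
    (hix : b.coord i x = 1) (hjx : b.coord j x = 1)
    (hsupp : (Function.support fun k => c (b k)) = {i, j}) :
    c = b.coord i + b.coord j := by
  classical
  have hsum : c = c (b i) • b.coord i + c (b j) • b.coord j := by
    rw [← Finset.sum_pair (f := fun k => c (b k) • b.coord k) hij]
    exact eq_sum_smul_coord_of_support_subset (by simp [hsupp])
  have htwo : c (b i) + c (b j) = 2 := by
    have h := LinearMap.congr_fun hsum x
    rw [LinearMap.add_apply, LinearMap.smul_apply, LinearMap.smul_apply, hix, hjx, hcx] at h
    simpa using h.symm
  have hi : c (b i) ≠ 0 := hsupp.superset (Set.mem_insert i {j})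
  have hj : c (b j) ≠ 0 := hsupp.superset (Set.mem_insert_of_mem i rfl)
  have hi_nonneg := hc i
  have hj_nonneg := hc j
  have hi_one : c (b i) = 1 := by omega
  have hj_one : c (b j) = 1 := by omega
  rwa [hi_one, hj_one, one_smul, one_smul] at hsum

lemma exists_pairedForms_eq_pair (hcx : c x = 2) (hc : ∀ i, 0 ≤ c (b i))
    (hle : ∀ i, b.coord i x ≤ 1) (hcard : (unitSupport b x).ncard ≤ 2)
    (heq : (unitSupport b x).ncard = 2 →
      unitSupport b x = Function.support fun i => c (b i)) :
    ∃ i, 1 ≤ c (b i) ∧ pairedForms b c x = {b.coord i, c - b.coord i} := by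
  have hne : (unitSupport b x).ncard ≠ 0 := by
    intro h
    have hE := (Set.ncard_eq_zero finite_unitSupport).mp h
    have hcx_le := apply_le_sum_of_unitSupport_subset hc hle (s := ∅)
      (by rw [hE, Finset.coe_empty])
    rw [hcx, Finset.sum_empty] at hcx_le
    omega
  obtain hone | htwo : (unitSupport b x).ncard = 1 ∨ (unitSupport b x).ncard = 2 := by omega
  · obtain ⟨i, hE⟩ := Set.ncard_eq_one.mp hone
    have hcx_le := apply_le_sum_of_unitSupport_subset hc hle (s := {i})
      (by rw [hE, Finset.coe_singleton])
    rw [hcx, Finset.sum_singleton] at hcx_le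
    exact ⟨i, by omega, pairedForms_of_unitSupport_eq_singleton hcx hE⟩
  · obtain ⟨i, j, hij, hE⟩ := Set.ncard_eq_two.mp htwo
    have hsupp : (Function.support fun k => c (b k)) = {i, j} := (heq htwo).symm.trans hE
    have hi : c (b i) ≠ 0 := hsupp.superset (Set.mem_insert i {j})
    have hix : b.coord i x = 1 := hE.superset (Set.mem_insert i {j})
    have hjx : b.coord j x = 1 := hE.superset (Set.mem_insert_of_mem i rfl)
    have hc_eq : c = b.coord i + b.coord j := eq_coord_add_coord hij hcx hc hix hjx hsupp
    exact ⟨i, Int.add_one_le_of_lt ((hc i).lt_of_ne' hi),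
      pairedForms_of_unitSupport_eq_pair hE hc_eq⟩

theorem ncard_pairedForms_eq_two_and_nonneg (hcx : c x = 2) (hc : ∀ i, 0 ≤ c (b i))
    (hsupp : (Function.support fun i => c (b i)).Nontrivial)
    (hle : ∀ i, b.coord i x ≤ 1) (hcard : (unitSupport b x).ncard ≤ 2)
    (heq : (unitSupport b x).ncard = 2 →
      unitSupport b x = Function.support fun i => c (b i)) :
    (pairedForms b c x).ncard = 2 ∧ ∀ δ ∈ pairedForms b c x, ∀ j, 0 ≤ δ (b j) := by
  obtain ⟨i, hi, hpair⟩ := exists_pairedForms_eq_pair hcx hc hle hcard heq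
  rw [hpair]
  refine ⟨Set.ncard_pair (coord_ne_sub_coord hsupp i), ?_⟩
  rintro δ (rfl | rfl) j
  · exact coord_basis_nonneg b i j
  · exact sub_coord_basis_nonneg hc hi j

end IntegralForms

lemma exists_basis_span_of_dual {R V : Type*} [CommRing R] [AddCommGroup V] [Module R V]
    {s : Set V} (φ : s → Dual R (Submodule.span R s))
    (hsame : ∀ i, φ i ⟨i, Submodule.subset_span i.2⟩ = 1)
    (hne : Pairwise fun i j => φ i ⟨j, Submodule.subset_span j.2⟩ = 0) :
    ∃ b : Basis s R (Submodule.span R s),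
      (∀ i, b i = ⟨i, Submodule.subset_span i.2⟩) ∧ ∀ i, b.coord i = φ i := by
  classical
  let v : s → Submodule.span R s := fun i => ⟨i, Submodule.subset_span i.2⟩
  have hspan : Submodule.span R (Set.range v) = ⊤ := by
    rw [← Submodule.span_span_coe_preimage]
    congr 1
    ext y
    exact ⟨by rintro ⟨i, rfl⟩; exact i.2, fun hy => ⟨⟨y, hy⟩, rfl⟩⟩
  let b := Basis.mk (.of_pairwise_dual_eq_zero_one v φ hne hsame) hspan.ge
  have hb : ∀ i, b i = v i := Basis.mk_apply _ _
  refine ⟨b, hb, fun i => b.ext fun j => ?_⟩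
  rw [b.coord_apply, b.repr_self_apply, hb]
  split_ifs with h
  · exact h ▸ (hsame j).symm
  · exact (hne (Ne.symm h)).symm

section InnerProductSpace

variable {V : Type*} [NormedAddCommGroup V] [InnerProductSpace ℝ V]

lemma cpair_zero_left (x : V) : cpair 0 x = 0 := by
  rw [cpair, inner_zero_left, mul_zero, zero_div]

lemma cpair_self {α : V} (hα : α ≠ 0) : cpair α α = 2 :=
  mul_div_cancel_right₀ 2 (inner_self_ne_zero.mpr hα)

lemma aSet_eq_pairedForms {F : Finset V} {lsharp : V → Dual ℤ (Submodule.span ℤ (F : Set V))}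
    {b : Basis (F : Set V) ℤ (Submodule.span ℤ (F : Set V))}
    (hb : ∀ i, b.coord i = lsharp i) (acheck : Dual ℤ (Submodule.span ℤ (F : Set V)))
    (α : V) (hα : α ∈ Submodule.span ℤ (F : Set V)) :
    aSet F lsharp acheck α hα = pairedForms b acheck ⟨α, hα⟩ := by
  ext δ
  simp only [aSet, pairedForms, Set.mem_ofPred_eq, Set.mem_range, hb, Subtype.exists,
    Finset.mem_coe, exists_prop, eq_comm]

theorem aSet_two_elements_general (F : Finset V)
    (lsharp : V → Dual ℤ (Submodule.span ℤ (F : Set V)))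
    (hlsharp : ∀ lam ∈ F, ∀ mu, ∀ hmu : mu ∈ F,
      (mu = lam → lsharp lam ⟨mu, Submodule.subset_span (Finset.mem_coe.mpr hmu)⟩ = 1) ∧
      (mu ≠ lam → lsharp lam ⟨mu, Submodule.subset_span (Finset.mem_coe.mpr hmu)⟩ = 0))
    (α : V) (hα : α ∈ Submodule.span ℤ (F : Set V)) (hnonneg : ∀ lam ∈ F, 0 ≤ cpair α lam)
    (acheck : Dual ℤ (Submodule.span ℤ (F : Set V)))
    (hacheck : ∀ x : Submodule.span ℤ (F : Set V), (acheck x : ℝ) = cpair α x)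
    (htwo : ∃ lam ∈ F, ∃ mu ∈ F, lam ≠ mu ∧ cpair α lam ≠ 0 ∧ cpair α mu ≠ 0)
    (hle : ∀ lam ∈ F, lsharp lam ⟨α, hα⟩ ≤ 1)
    (hcard : Set.ncard {lam ∈ (F : Set V) | lsharp lam ⟨α, hα⟩ = 1} ≤ 2)
    (heq : Set.ncard {lam ∈ (F : Set V) | lsharp lam ⟨α, hα⟩ = 1} = 2 →
      {lam ∈ (F : Set V) | lsharp lam ⟨α, hα⟩ = 1} =
        {lam ∈ (F : Set V) | cpair α lam ≠ 0}) :
    Set.ncard (aSet F lsharp acheck α hα) = 2 ∧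
      ∀ δ ∈ aSet F lsharp acheck α hα, ∀ lam, ∀ hlam : lam ∈ F,
        0 ≤ δ ⟨lam, Submodule.subset_span (Finset.mem_coe.mpr hlam)⟩ := by
  obtain ⟨b, hb, hcoord⟩ := exists_basis_span_of_dual (fun i : (F : Set V) => lsharp i)
    (fun i => (hlsharp i i.2 i i.2).1 rfl)
    fun i j hij => (hlsharp i i.2 j j.2).2 fun h => hij (Subtype.ext h.symm)
  have hcast (i : (F : Set V)) : (acheck (b i) : ℝ) = cpair α i := by rw [hacheck, hb]
  have hacheck_α : acheck ⟨α, hα⟩ = 2 := by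
    obtain ⟨lam, -, -, -, -, hlam, -⟩ := htwo
    have hα0 : α ≠ 0 := by rintro rfl; exact hlam (cpair_zero_left lam)
    exact_mod_cast (hacheck ⟨α, hα⟩).trans (cpair_self hα0)
  have hacheck_nonneg (i : (F : Set V)) : 0 ≤ acheck (b i) := by
    exact_mod_cast (hnonneg i i.2).trans_eq (hcast i).symm
  have hmem_support (i : (F : Set V)) : acheck (b i) ≠ 0 ↔ cpair α i ≠ 0 := by
    rw [← hcast, Int.cast_ne_zero]
  have hE : (↑) '' unitSupport b ⟨α, hα⟩ = {lam ∈ (F : Set V) | lsharp lam ⟨α, hα⟩ = 1} := by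
    ext lam
    simp [unitSupport, hcoord, and_comm]
  have hS : (↑) '' (Function.support fun i => acheck (b i)) =
      {lam ∈ (F : Set V) | cpair α lam ≠ 0} := by
    ext lam
    simp [hmem_support, and_comm]
  rw [← hE, Set.ncard_image_of_injective _ Subtype.val_injective] at hcard heq
  rw [← hS, Subtype.val_injective.image_injective.eq_iff] at heq
  have hsupp : (Function.support fun i => acheck (b i)).Nontrivial := by
    obtain ⟨lam, hlam, mu, hmu, hne, hcl, hcm⟩ := htwo
    exact ⟨⟨lam, hlam⟩, (hmem_support _).mpr hcl, ⟨mu, hmu⟩, (hmem_support _).mpr hcm,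
      fun h => hne (congrArg Subtype.val h)⟩
  obtain ⟨hncard, hpos⟩ := ncard_pairedForms_eq_two_and_nonneg hacheck_α hacheck_nonneg hsupp
    (fun i => hcoord i ▸ hle i i.2) hcard heq
  rw [aSet_eq_pairedForms hcoord]
  exact ⟨hncard, fun δ hδ lam hlam => hb ⟨lam, hlam⟩ ▸ hpos δ hδ ⟨lam, hlam⟩⟩

end InnerProductSpace

/-- Let `α` be a simple root with `α ∈ ℤΓ` such that: (i) at least two
elements `λ` of `F` satisfy `⟨α^∨, λ⟩ ≠ 0`; (ii) `λ^#(α) ≤ 1` for every `λ ∈ F`;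
(iii) `E(α) = {λ ∈ F : λ^#(α) = 1}` has at most two elements; (iv) if `E(α)` has exactly two
elements then `E(α) = {λ ∈ F : ⟨α^∨, λ⟩ ≠ 0}`.  Then `a(α)` has exactly two elements and
every `δ ∈ a(α)` satisfies `δ(λ) ≥ 0` for all `λ ∈ F`. -/
theorem aSet_two_elements {V : Type*} [NormedAddCommGroup V] [InnerProductSpace ℝ V]
    [FiniteDimensional ℝ V] (R : BasedRootSystem V) (F : Finset V)
    (hFdom : ∀ lam ∈ F, R.IsDominant lam)
    (hFindep : LinearIndependent ℝ (Subtype.val : ↥(F : Set V) → V))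
    (lsharp : V → (Submodule.span ℤ (F : Set V) →ₗ[ℤ] ℤ))
    (hlsharp : ∀ lam ∈ F, ∀ mu, ∀ hmu : mu ∈ F,
      (mu = lam → lsharp lam ⟨mu, Submodule.subset_span (Finset.mem_coe.mpr hmu)⟩ = 1) ∧
      (mu ≠ lam → lsharp lam ⟨mu, Submodule.subset_span (Finset.mem_coe.mpr hmu)⟩ = 0))
    (α : V) (hαS : α ∈ R.S) (hα : α ∈ Submodule.span ℤ (F : Set V))
    (acheck : Submodule.span ℤ (F : Set V) →ₗ[ℤ] ℤ)
    (hacheck : ∀ x : Submodule.span ℤ (F : Set V), (acheck x : ℝ) = cpair α x)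
    (htwo : ∃ lam ∈ F, ∃ mu ∈ F, lam ≠ mu ∧ cpair α lam ≠ 0 ∧ cpair α mu ≠ 0)
    (hle : ∀ lam ∈ F, lsharp lam ⟨α, hα⟩ ≤ 1)
    (hcard : Set.ncard {lam ∈ (F : Set V) | lsharp lam ⟨α, hα⟩ = 1} ≤ 2)
    (heq : Set.ncard {lam ∈ (F : Set V) | lsharp lam ⟨α, hα⟩ = 1} = 2 →
      {lam ∈ (F : Set V) | lsharp lam ⟨α, hα⟩ = 1} =
        {lam ∈ (F : Set V) | cpair α lam ≠ 0}) :
    Set.ncard (aSet F lsharp acheck α hα) = 2 ∧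
      ∀ δ ∈ aSet F lsharp acheck α hα, ∀ lam, ∀ hlam : lam ∈ F,
        0 ≤ δ ⟨lam, Submodule.subset_span (Finset.mem_coe.mpr hlam)⟩ :=
  aSet_two_elements_general F lsharp hlsharp α hα
    (fun lam hlam => (hFdom lam hlam α hαS).elim fun n hn => hn ▸ n.cast_nonneg)
    acheck hacheck htwo hle hcard heq
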